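/- For all x > 0, one has (16/21)·ln(x + 1/2) + (5/42)·ln(x² + x + 3/5) < ψ(x+1) < (16/21)·ln(x + 1/2) + (5/42)·ln(x² + x + 3/5) − c₀, where c₀ = γ − (8/21)·ln 4 + (5/42)·ln(3/5) (numerically c₀ ≈ −0.011709). -/

import Mathlib

open Real Filter Set

/-- The digamma function ψ(x) = Γ'(x)/Γ(x), as the derivative of log ∘ Γ. -/
noncomputable def digamma (x : ℝ) : ℝ := deriv (fun y : ℝ => Real.log (Real.Gamma y)) x

/-- L(x,a) = (1/(90a²+2))·ln(x²+x+(3a+1)/3) + (45a²/(90a²+2))·ln(x²+x+(15a−1)/(45a)). -/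
noncomputable def L (x a : ℝ) : ℝ :=
  (1 / (90 * a ^ 2 + 2)) * Real.log (x ^ 2 + x + (3 * a + 1) / 3) +
    (45 * a ^ 2 / (90 * a ^ 2 + 2)) * Real.log (x ^ 2 + x + (15 * a - 1) / (45 * a))

theorem dg_diff {y : ℝ} (hy : 0 < y) :
    DifferentiableAt ℝ (fun y : ℝ => Real.log (Real.Gamma y)) y := by
  apply DifferentiableAt.log
  · apply Real.differentiableAt_Gamma
    intro m hm
    have : (0 : ℝ) ≤ m := Nat.cast_nonneg m
    linarith
  · exact (Real.Gamma_pos_of_pos hy).ne'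

theorem lg_add {y : ℝ} (hy : 0 < y) :
    Real.log (Real.Gamma (y + 1)) = Real.log y + Real.log (Real.Gamma y) := by
  rw [Real.Gamma_add_one hy.ne', Real.log_mul hy.ne' (Real.Gamma_pos_of_pos hy).ne']

theorem dg_add {y : ℝ} (hy : 0 < y) : digamma (y + 1) = digamma y + 1 / y := by
  unfold digamma
  rw [← deriv_comp_add_const]
  have h : (fun x : ℝ => Real.log (Real.Gamma (x + 1))) =ᶠ[nhds y]
      fun x => Real.log x + Real.log (Real.Gamma x) := by
    filter_upwards [lt_mem_nhds hy] with x hx using lg_add hx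
  rw [h.deriv_eq, deriv_fun_add (Real.differentiableAt_log hy.ne') (dg_diff hy), Real.deriv_log]
  rw [one_div, add_comm]

theorem dg_lower {y : ℝ} (hy : 0 < y) : Real.log y ≤ digamma (y + 1) := by
  have h := Real.convexOn_log_Gamma.slope_le_deriv (x := y) (y := y + 1) hy
    (show (0:ℝ) < y + 1 by linarith) (by linarith) (dg_diff (by linarith))
  rw [slope_def_field] at h
  simp only [Function.comp_apply, lg_add hy] at h
  have e : (Real.log y + Real.log (Real.Gamma y) - Real.log (Real.Gamma y)) / (y + 1 - y)
    = Real.log y := by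
    rw [add_sub_cancel_right, add_sub_cancel_left, div_one]
  rw [e] at h
  exact h

theorem dg_upper {y : ℝ} (hy : 0 < y) : digamma y ≤ Real.log y := by
  have h := Real.convexOn_log_Gamma.deriv_le_slope (x := y) (y := y + 1) hy
    (show (0:ℝ) < y + 1 by linarith) (by linarith) (dg_diff (by linarith))
  rw [slope_def_field] at h
  simp only [Function.comp_apply, lg_add hy] at h
  have e : (Real.log y + Real.log (Real.Gamma y) - Real.log (Real.Gamma y)) / (y + 1 - y)
    = Real.log y := by
    rw [add_sub_cancel_right, add_sub_cancel_left, div_one]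
  rw [e] at h
  exact h

theorem dg_one : digamma 1 = - Real.eulerMascheroniConstant := by
  unfold digamma
  have h := Real.hasDerivAt_Gamma_one.log (by simp)
  rw [h.deriv]
  simp

noncomputable def AA (x : ℝ) : ℝ :=
  (16 / 21) * Real.log (x + 1 / 2) + (5 / 42) * Real.log (x ^ 2 + x + 3 / 5)

noncomputable def FF (x : ℝ) : ℝ := digamma (x + 1) - AA x

noncomputable def GG (x : ℝ) : ℝ := AA (x + 1) - AA x - 1 / (x + 1)

theorem FF_sub {x : ℝ} (hx : 0 ≤ x) : FF x - FF (x + 1) = GG x := by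
  unfold FF GG
  rw [dg_add (y := x + 1) (by linarith)]
  ring

theorem AA_log : Tendsto (fun y => AA y - Real.log y) atTop (nhds 0) := by
  have h : Tendsto (fun z : ℝ => (16 / 21) * Real.log (1 + z / 2) +
      (5 / 42) * Real.log (1 + z + 3 / 5 * z ^ 2)) (nhds 0) (nhds 0) := by
    have : ContinuousAt (fun z : ℝ => (16 / 21) * Real.log (1 + z / 2) +
      (5 / 42) * Real.log (1 + z + 3 / 5 * z ^ 2)) 0 := by
      refine ContinuousAt.add (continuousAt_const.mul (ContinuousAt.log (by fun_prop) (by norm_num)))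
        (continuousAt_const.mul (ContinuousAt.log (by fun_prop) (by norm_num)))
    simpa [ContinuousAt] using this
  refine (h.comp tendsto_inv_atTop_zero).congr' ?_
  filter_upwards [eventually_gt_atTop 0] with y hy
  have h1 : y + 1 / 2 = y * (1 + y⁻¹ / 2) := by field_simp
  have h2 : y ^ 2 + y + 3 / 5 = y ^ 2 * (1 + y⁻¹ + 3 / 5 * y⁻¹ ^ 2) := by field_simp
  have hi : 0 < y⁻¹ := by positivity
  simp only [AA, Function.comp_apply]
  rw [h1, h2, Real.log_mul (by positivity) (by positivity),
    Real.log_mul (by positivity) (by positivity), Real.log_pow]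
  push_cast
  ring

theorem FF_lim : Tendsto FF atTop (nhds 0) := by
  have h1 : Tendsto (fun y : ℝ => Real.log (1 + y⁻¹)) atTop (nhds 0) := by
    have : ContinuousAt (fun z : ℝ => Real.log (1 + z)) 0 :=
      ContinuousAt.log (by fun_prop) (by norm_num)
    have h : Tendsto (fun z : ℝ => Real.log (1 + z)) (nhds 0) (nhds 0) := by
      simpa [ContinuousAt] using this
    exact h.comp tendsto_inv_atTop_zero
  have hA := AA_log
  have hl := hA.neg
  have hu := h1.sub hA
  simp only [neg_zero, sub_zero] at hl hu
  refine tendsto_of_tendsto_of_tendsto_of_le_of_le' hl hu ?_ ?_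
  · filter_upwards [eventually_gt_atTop 0] with y hy
    have := dg_lower hy
    unfold FF; linarith
  · filter_upwards [eventually_gt_atTop 0] with y hy
    have := dg_upper (y := y + 1) (by linarith)
    have e : y + 1 = y * (1 + y⁻¹) := by field_simp
    have e2 : Real.log (y + 1) = Real.log y + Real.log (1 + y⁻¹) := by
      rw [e, Real.log_mul hy.ne' (by positivity)]
    unfold FF; linarith

theorem AA_deriv {x : ℝ} (hx : 0 ≤ x) : HasDerivAt AA
    ((16 / 21) * (1 / (x + 1 / 2)) + (5 / 42) * ((2 * x + 1) / (x ^ 2 + x + 3 / 5))) x := by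
  unfold AA
  have h1 : HasDerivAt (fun x : ℝ => x + 1 / 2) 1 x := (hasDerivAt_id x).add_const _
  have h2 : HasDerivAt (fun x : ℝ => x ^ 2 + x + 3 / 5) (2 * x + 1) x := by
    have := (((hasDerivAt_pow 2 x).add (hasDerivAt_id x)).add_const (3 / 5 : ℝ))
    simpa using this
  exact ((h1.log (by positivity)).const_mul _).add ((h2.log (by positivity)).const_mul _)

theorem GG_deriv {x : ℝ} (hx : 0 ≤ x) : HasDerivAt GG
    ((16 / 21) * (1 / (x + 1 + 1 / 2)) +
      (5 / 42) * ((2 * (x + 1) + 1) / ((x + 1) ^ 2 + (x + 1) + 3 / 5)) -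
     ((16 / 21) * (1 / (x + 1 / 2)) + (5 / 42) * ((2 * x + 1) / (x ^ 2 + x + 3 / 5))) +
      1 / (x + 1) ^ 2) x := by
  have h1 := (AA_deriv (x := x + 1) (by linarith)).comp_add_const x 1
  have h3 : HasDerivAt (fun x : ℝ => x + 1) 1 x := (hasDerivAt_id x).add_const _
  have h4 := h3.inv (by positivity)
  have := (h1.sub (AA_deriv hx)).sub h4
  have e : GG = (fun x => AA (x + 1)) - AA - (fun x : ℝ => x + 1)⁻¹ := by
    funext y; simp [GG]
  rw [e]
  refine this.congr_deriv ?_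
  ring

theorem GG_deriv_neg {x : ℝ} (hx : 0 ≤ x) :
    ((16 / 21) * (1 / (x + 1 + 1 / 2)) +
      (5 / 42) * ((2 * (x + 1) + 1) / ((x + 1) ^ 2 + (x + 1) + 3 / 5)) -
     ((16 / 21) * (1 / (x + 1 / 2)) + (5 / 42) * ((2 * x + 1) / (x ^ 2 + x + 3 / 5))) +
      1 / (x + 1) ^ 2) < 0 := by
  have e : ((16 / 21) * (1 / (x + 1 + 1 / 2)) +
      (5 / 42) * ((2 * (x + 1) + 1) / ((x + 1) ^ 2 + (x + 1) + 3 / 5)) -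
     ((16 / 21) * (1 / (x + 1 / 2)) + (5 / 42) * ((2 * x + 1) / (x ^ 2 + x + 3 / 5))) +
      1 / (x + 1) ^ 2) = - ((9 / 100) / ((x + 1) ^ 2 * (x + 1 + 1 / 2) * (x + 1 / 2) *
        ((x + 1) ^ 2 + (x + 1) + 3 / 5) * (x ^ 2 + x + 3 / 5))) := by
    have a1 : x + 1 + 1 / 2 ≠ 0 := by positivity
    have a2 : x + 1 / 2 ≠ 0 := by positivity
    have a3 : (x + 1) ^ 2 + (x + 1) + 3 / 5 ≠ 0 := by positivity
    have a4 : x ^ 2 + x + 3 / 5 ≠ 0 := by positivity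
    have a5 : x + 1 ≠ 0 := by positivity
    generalize hb1 : x + 1 + 1 / 2 = b1 at *
    generalize hb2 : x + 1 / 2 = b2 at *
    generalize hb3 : (x + 1) ^ 2 + (x + 1) + 3 / 5 = b3 at *
    generalize hb4 : x ^ 2 + x + 3 / 5 = b4 at *
    field_simp
    subst hb1 hb2 hb3 hb4
    ring
  rw [e, neg_lt_zero]
  positivity

theorem GG_anti : StrictAntiOn GG (Ici 0) := by
  refine strictAntiOn_of_deriv_neg (convex_Ici 0)
    (fun x hx => (GG_deriv hx).continuousAt.continuousWithinAt) ?_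
  intro x hx
  rw [interior_Ici] at hx
  have hx' : 0 ≤ x := le_of_lt hx
  rw [(GG_deriv hx').deriv]
  exact GG_deriv_neg hx'

theorem seq_pos {u : ℕ → ℝ} (hu : ∀ n, u (n + 1) < u n) (h : Tendsto u atTop (nhds 0)) :
    0 < u 0 :=
  lt_of_le_of_lt ((strictAnti_nat_of_succ_lt hu).antitone.le_of_tendsto h 1) (hu 0)

theorem nat_lim (x : ℝ) : Tendsto (fun n : ℕ => x + n) atTop atTop :=
  tendsto_atTop_add_const_left _ _ tendsto_natCast_atTop_atTop

theorem GG_pos {x : ℝ} (hx : 0 ≤ x) : 0 < GG x := by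
  have h : Tendsto (fun n : ℕ => GG (x + n)) atTop (nhds 0) := by
    have h1 := FF_lim.comp (nat_lim x)
    have h2 := h1.sub (FF_lim.comp (nat_lim (x + 1)))
    simp only [sub_zero] at h2
    refine h2.congr fun n => ?_
    rw [← FF_sub (by positivity)]
    simp only [Function.comp_apply]
    congr 2
    ring
  have := seq_pos (u := fun n : ℕ => GG (x + n)) (fun n => ?_) h
  · simpa using this
  · apply GG_anti
    · show (0:ℝ) ≤ _
      positivity
    · show (0:ℝ) ≤ _
      positivity
    · push_cast; linarith

theorem FF_pos {x : ℝ} (hx : 0 ≤ x) : 0 < FF x := by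
  have := seq_pos (u := fun n : ℕ => FF (x + n)) (fun n => ?_) (FF_lim.comp (nat_lim x))
  · simpa using this
  · have h0 : 0 ≤ x + n := by positivity
    have h1 := FF_sub h0
    have h2 := GG_pos h0
    have e : x + ((n + 1 : ℕ) : ℝ) = x + n + 1 := by push_cast; ring
    simp only [e]
    linarith

theorem FF_lt {x : ℝ} (hx : 0 < x) : FF x < FF 0 := by
  have hl := (FF_lim.comp (nat_lim 0)).sub (FF_lim.comp (nat_lim x))
  rw [sub_zero] at hl
  have := seq_pos (u := fun n : ℕ => FF (0 + n) - FF (x + n)) (fun n => ?_) hl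
  · simp at this; linarith
  · have h0 : 0 ≤ x + n := by positivity
    have h0' : 0 ≤ (0 : ℝ) + n := by positivity
    have h1 := FF_sub h0
    have h1' := FF_sub h0'
    have h2 : GG (x + n) < GG (0 + n) := GG_anti h0' h0 (by linarith)
    have e (z : ℝ) : z + ((n + 1 : ℕ) : ℝ) = z + n + 1 := by push_cast; ring
    simp only [e]
    linarith

/-- For x > 0, (16/21)ln(x+1/2) + (5/42)ln(x²+x+3/5) < ψ(x+1)
< (16/21)ln(x+1/2) + (5/42)ln(x²+x+3/5) − c₀, with c₀ = γ − (8/21)ln 4 + (5/42)ln(3/5). -/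
theorem stmt_16 (x : ℝ) (hx : 0 < x) :
    (16 / 21) * Real.log (x + 1 / 2) + (5 / 42) * Real.log (x ^ 2 + x + 3 / 5) <
      digamma (x + 1) ∧
    digamma (x + 1) <
      (16 / 21) * Real.log (x + 1 / 2) + (5 / 42) * Real.log (x ^ 2 + x + 3 / 5) -
        (Real.eulerMascheroniConstant - (8 / 21) * Real.log 4 + (5 / 42) * Real.log (3 / 5)) := by
  have h1 := FF_pos hx.le
  have h2 := FF_lt hx
  have h0 : FF 0 = -(Real.eulerMascheroniConstant - (8 / 21) * Real.log 4
      + (5 / 42) * Real.log (3 / 5)) := by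
    have h4 : Real.log 4 = 2 * Real.log 2 := by
      rw [show (4:ℝ) = 2 ^ 2 by norm_num, Real.log_pow]; norm_num
    have h5 : Real.log (1 / 2) = - Real.log 2 := by rw [one_div, Real.log_inv]
    unfold FF AA
    rw [zero_add, dg_one, zero_add, h5, h4,
      show (0:ℝ) ^ 2 + 0 + 3 / 5 = 3 / 5 by norm_num]
    ring
  rw [h0] at h2
  unfold FF AA at h1 h2
  constructor <;> linarith
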